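/- arXiv:1604.06997 — 2 statements merged into one kernel-verified Lean document; each statement's English description precedes it below -/
import Mathlib

section
/- Let p, q, r ∈ X ∪ G with time(q) < time(p) and key(p) < key(q), and suppose r hides q from p. Suppose some point of X ∪ G below q has time greater than time(r) and key greater than key(r), and let s be such a point with the smallest time. Then key(OP(s)) > key(r) and time(OP(s)) > time(r). -/
open Finset

attribute [local instance] Classical.propDecidable

/-- A point in the plane: first coordinate is the key, second is the time. -/
abbrev Pt : Type := ℤ × ℤ

/-- `r` lies in the closed axis-parallel rectangle with opposite corners `p` and `q`. -/
def inRect (p q r : Pt) : Prop :=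
  min p.1 q.1 ≤ r.1 ∧ r.1 ≤ max p.1 q.1 ∧ min p.2 q.2 ≤ r.2 ∧ r.2 ≤ max p.2 q.2

/-- `r` lies in the open axis-parallel rectangle with opposite corners `p` and `q`. -/
def inOpenRect (p q r : Pt) : Prop :=
  min p.1 q.1 < r.1 ∧ r.1 < max p.1 q.1 ∧ min p.2 q.2 < r.2 ∧ r.2 < max p.2 q.2

/-- `S` is an arborally satisfied set. -/
def ArbSat (S : Finset Pt) : Prop :=
  ∀ p ∈ S, ∀ q ∈ S, p.1 = q.1 ∨ p.2 = q.2 ∨ ∃ r ∈ S, r ≠ p ∧ r ≠ q ∧ inRect p q r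

/-- `X` is the permutation point set `{(σ(t), t) : 1 ≤ t ≤ n}` of some permutation `σ` of
`{1, …, n}`. -/
def IsPermPointSet (n : ℕ) (X : Finset Pt) : Prop :=
  ∃ σ : Equiv.Perm (Fin n),
    X = Finset.univ.image (fun t : Fin n => ((((σ t : ℕ) : ℤ) + 1, ((t : ℕ) : ℤ) + 1) : Pt))

/-- The points added by GREEDY at time `t`, given the point set `X` and the set `G` of points
added before time `t`: for the point `p` of `X` with time `t` and each point `q` of time `< t`
with a different key such that the rectangle spanned by `p` and `q` contains no other point of
time `< t`, the point `(key q, t)` is added. -/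
noncomputable def greedyStep (X G : Finset Pt) (t : ℤ) : Finset Pt :=
  (X.filter (fun p => p.2 = t)).biUnion (fun p =>
    (((X ∪ G).filter (fun s => s.2 < t)).filter (fun q =>
      q.1 ≠ p.1 ∧ ∀ r ∈ (X ∪ G).filter (fun s => s.2 < t), inRect p q r → r = q)).image
      (fun q => ((q.1, t) : Pt)))

/-- All points added by GREEDY while processing times `1, …, t`. -/
noncomputable def greedyUpTo (X : Finset Pt) : ℕ → Finset Pt
  | 0 => ∅
  | t + 1 => greedyUpTo X t ∪ greedyStep X (greedyUpTo X t) ((t : ℤ) + 1)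

/-- The set `G` of points added by GREEDY over the whole execution on a permutation point set
`X` of size `n`. -/
noncomputable def greedyG (n : ℕ) (X : Finset Pt) : Finset Pt := greedyUpTo X n

/-- `OP r` is the point of `X` processed at the time at which `r` was added; for `r ∈ X`,
`OP r = r`. -/
noncomputable def OP (X : Finset Pt) (r : Pt) : Pt :=
  ((X.filter (fun p => p.2 = r.2)).toList).headI

/-- The first point of `S` above `p`: the point of `S` with the same key as `p`, smaller time,
and the largest such time. -/
noncomputable def firstAbove (S : Finset Pt) (p : Pt) : Pt :=
  (p.1, (((S.filter (fun q => q.1 = p.1 ∧ q.2 < p.2)).image Prod.snd).max).unbotD 0)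

/-- The pair `CP(p) = (OP(p), OP(q))` where `q` is the first point of `X ∪ G` above `p`. -/
noncomputable def CP (X G : Finset Pt) (p : Pt) : Pt × Pt :=
  (OP X p, OP X (firstAbove (X ∪ G) p))

/-- `CP(p) ∈ MMC` (*zig*). -/
def inMMC (X G : Finset Pt) (p : Pt) : Prop :=
  ((CP X G p).1.1 < p.1 ∧ (CP X G p).2.1 < (CP X G p).1.1 ∧ (CP X G p).2.2 < (CP X G p).1.2)
  ∨ (p.1 < (CP X G p).1.1 ∧ (CP X G p).1.1 < (CP X G p).2.1 ∧ (CP X G p).2.2 < (CP X G p).1.2)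

/-- `CP(p) ∈ MFC` (*zag*). -/
def inMFC (X G : Finset Pt) (p : Pt) : Prop :=
  ((CP X G p).1.1 < p.1 ∧ p.1 ≤ (CP X G p).2.1 ∧ (CP X G p).2.2 < p.2)
  ∨ (p.1 < (CP X G p).1.1 ∧ (CP X G p).2.1 ≤ p.1 ∧ (CP X G p).2.2 < p.2)

/-- A pair is good if no point of `X` lies in the open rectangle spanned by it. -/
def IsGoodPair (X : Finset Pt) (pr : Pt × Pt) : Prop :=
  ∀ r ∈ X, ¬ inOpenRect pr.1 pr.2 r

/-- `B` is a block of `X`: the set of points of `X` whose times lie in some interval, whose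
keys form a set of consecutive integers; blocks are nonempty. -/
def IsBlock (X B : Finset Pt) : Prop :=
  B.Nonempty ∧ (∃ i j : ℤ, B = X.filter (fun p => i ≤ p.2 ∧ p.2 ≤ j)) ∧
    ∃ c d : ℤ, B.image Prod.fst = Finset.Icc c d

/-- `Top(B)`: the point of `B` with the smallest time. -/
noncomputable def TopPt (B : Finset Pt) : Pt :=
  ((B.filter (fun p => ∀ q ∈ B, p.2 ≤ q.2)).toList).headI

/-- A decomposition tree of `X`: a rooted tree whose nodes are blocks of `X`, whose root is
`X`, whose leaves are exactly the singleton blocks, and in which the children of every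
internal node partition it. -/
structure DecompTree (X : Finset Pt) where
  nodes : Finset (Finset Pt)
  parent : Finset Pt → Finset Pt
  isBlock_nodes : ∀ B ∈ nodes, IsBlock X B
  root_mem : X ∈ nodes
  parent_mem : ∀ B ∈ nodes, B ≠ X → parent B ∈ nodes
  ssubset_parent : ∀ B ∈ nodes, B ≠ X → B ⊂ parent B
  leaf_iff : ∀ B ∈ nodes, (¬ ∃ C ∈ nodes, C ≠ X ∧ parent C = B) ↔ B.card = 1
  children_partition : ∀ B ∈ nodes, B.card ≠ 1 →
    ∀ x ∈ B, ∃! C, C ∈ nodes ∧ C ≠ X ∧ parent C = B ∧ x ∈ C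

/-- The children of a node `B` in a decomposition tree. -/
noncomputable def DecompTree.children {X : Finset Pt} (T : DecompTree X) (B : Finset Pt) :
    Finset (Finset Pt) :=
  T.nodes.filter (fun C => C ≠ X ∧ T.parent C = B)

/-- `X` is `k`-decomposable: it admits a decomposition tree in which every node has at most
`k` children. -/
def kDecomposable (k : ℕ) (X : Finset Pt) : Prop :=
  ∃ T : DecompTree X, ∀ B ∈ T.nodes, (T.children B).card ≤ k

/-- `RT(p)`: the node of the decomposition tree closest to the root (i.e. containing all
others) among the nodes `B` with `Top(B) = p`. -/
noncomputable def RT {X : Finset Pt} (T : DecompTree X) (p : Pt) : Finset Pt :=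
  (((T.nodes.filter (fun B => TopPt B = p)).filter
      (fun B => ∀ C ∈ T.nodes, TopPt C = p → C ⊆ B)).toList).headI

/-- The points added by GREEDY (`G`) while processing `Top(B)` that lie to the left of
`Top(B)`. -/
noncomputable def leftSet (G B : Finset Pt) : Finset Pt :=
  G.filter (fun s => s.2 = (TopPt B).2 ∧ s.1 < (TopPt B).1)

/-- `Left(B)`: among the points added by GREEDY while processing `Top(B)` with key less than
`key (Top B)`, the one with the largest key (junk if none exists). -/
noncomputable def leftPt (G B : Finset Pt) : Pt :=
  (((leftSet G B).filter (fun s => ∀ r ∈ leftSet G B, r.1 ≤ s.1)).toList).headI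

/-- The points added by GREEDY (`G`) while processing `Top(B)` that lie to the right of
`Top(B)`. -/
noncomputable def rightSet (G B : Finset Pt) : Finset Pt :=
  G.filter (fun s => s.2 = (TopPt B).2 ∧ (TopPt B).1 < s.1)

/-- `Right(B)`: among the points added by GREEDY while processing `Top(B)` with key greater
than `key (Top B)`, the one with the smallest key (junk if none exists). -/
noncomputable def rightPt (G B : Finset Pt) : Pt :=
  (((rightSet G B).filter (fun s => ∀ r ∈ rightSet G B, s.1 ≤ r.1)).toList).headI

/-! A point `s` is added by GREEDY because of an earlier point `u` of its column such that `u` is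
the only earlier point in the rectangle spanned by `OP(s)` and `u`. If the key of an earlier point
`r` outside the column lies between those of `OP(s)` and `s`, then `u` is later than `r`, since
otherwise `r` would lie in that rectangle. So if `s` is the first point of its column after `r`, its
key and that of `OP(s)` are on the same side of `r`. -/

theorem IsPermPointSet.injOn_snd {n : ℕ} {X : Finset Pt} (hX : IsPermPointSet n X) :
    Set.InjOn Prod.snd (X : Set Pt) := by
  obtain ⟨σ, rfl⟩ := hX
  intro a ha b hb hab
  simp only [coe_image, coe_univ, Set.image_univ, Set.mem_range] at ha hb
  obtain ⟨i, rfl⟩ := ha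
  obtain ⟨j, rfl⟩ := hb
  have hij : i = j := Fin.ext (by simpa using hab)
  rw [hij]

section Greedy

variable {n : ℕ} {X : Finset Pt}

theorem OP_eq_of_time_eq (hX : Set.InjOn Prod.snd (X : Set Pt)) {x s : Pt} (hx : x ∈ X)
    (hxs : x.2 = s.2) : OP X s = x := by
  have hfilter : X.filter (fun p => p.2 = s.2) = {x} := by
    ext y
    simp only [mem_filter, mem_singleton]
    exact ⟨fun ⟨hy, hys⟩ => hX hy hx (hys.trans hxs.symm), by rintro rfl; exact ⟨hx, hxs⟩⟩
  simp [OP, hfilter]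

theorem inRect_iff_mem_uIcc {p q r : Pt} :
    inRect p q r ↔ r.1 ∈ Set.uIcc p.1 q.1 ∧ r.2 ∈ Set.uIcc p.2 q.2 := by
  simp only [inRect, Set.uIcc, Set.mem_Icc, and_assoc]

theorem mem_greedyStep {G : Finset Pt} {t : ℤ} {s : Pt} :
    s ∈ greedyStep X G t ↔ s.2 = t ∧ ∃ x ∈ X, x.2 = t ∧
      ∃ u ∈ X ∪ G, u.1 = s.1 ∧ u.2 < t ∧ u.1 ≠ x.1 ∧
        ∀ r ∈ X ∪ G, r.2 < t → inRect x u r → r = u := by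
  simp only [greedyStep, mem_biUnion, mem_image, mem_filter]
  constructor
  · rintro ⟨x, ⟨hx, hxt⟩, u, ⟨⟨hu, hut⟩, hux, hempty⟩, rfl⟩
    exact ⟨rfl, x, hx, hxt, u, hu, rfl, hut, hux, fun r hr hrt => hempty r ⟨hr, hrt⟩⟩
  · rintro ⟨hst, x, hx, hxt, u, hu, hus, hut, hux, hempty⟩
    exact ⟨x, ⟨hx, hxt⟩, u, ⟨⟨hu, hut⟩, hux, fun r hr => hempty r hr.1 hr.2⟩,
      Prod.ext hus hst.symm⟩

theorem greedyStep_congr {G G' : Finset Pt} {t : ℤ} (h : ∀ a : Pt, a.2 < t → (a ∈ G ↔ a ∈ G')) :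
    greedyStep X G t = greedyStep X G' t := by
  have hfilter : (X ∪ G).filter (fun a => a.2 < t) = (X ∪ G').filter (fun a => a.2 < t) := by
    ext a
    simp only [mem_filter, mem_union]
    exact and_congr_left fun hat => or_congr_right (h a hat)
  rw [greedyStep, greedyStep, hfilter]

theorem mem_greedyUpTo {m : ℕ} {s : Pt} :
    s ∈ greedyUpTo X m ↔ ∃ t < m, s ∈ greedyStep X (greedyUpTo X t) ((t : ℤ) + 1) := by
  induction m with
  | zero => simp [greedyUpTo]
  | succ m ih => simp only [greedyUpTo, mem_union, ih, Nat.exists_lt_succ_right]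

theorem mem_greedyUpTo_of_time_le {m k : ℕ} {s : Pt} (hs : s ∈ greedyUpTo X m) (hsk : s.2 ≤ k) :
    s ∈ greedyUpTo X k := by
  obtain ⟨t, -, hst⟩ := mem_greedyUpTo.1 hs
  have htime : s.2 = t + 1 := (mem_greedyStep.1 hst).1
  exact mem_greedyUpTo.2 ⟨t, by omega, hst⟩

theorem mem_greedyStep_of_mem_greedyG {s : Pt} (hs : s ∈ greedyG n X) :
    s ∈ greedyStep X (greedyG n X) s.2 := by
  obtain ⟨t, htn, hst⟩ := mem_greedyUpTo.1 hs
  have htime : s.2 = t + 1 := (mem_greedyStep.1 hst).1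
  have hsame : ∀ a : Pt, a.2 < (t : ℤ) + 1 → (a ∈ greedyUpTo X t ↔ a ∈ greedyG n X) :=
    fun a hat => ⟨fun ha => mem_greedyUpTo_of_time_le ha (by omega),
      fun ha => mem_greedyUpTo_of_time_le ha (by omega)⟩
  rwa [htime, ← greedyStep_congr hsame]

theorem time_OP_eq (hX : Set.InjOn Prod.snd (X : Set Pt)) {s : Pt} (hs : s ∈ X ∪ greedyG n X) :
    (OP X s).2 = s.2 := by
  obtain ⟨x, hx, hxs⟩ : ∃ x ∈ X, x.2 = s.2 := by
    rcases mem_union.1 hs with hsX | hsG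
    · exact ⟨s, hsX, rfl⟩
    · obtain ⟨-, x, hx, hxs, -⟩ := mem_greedyStep.1 (mem_greedyStep_of_mem_greedyG hsG)
      exact ⟨x, hx, hxs⟩
  rw [OP_eq_of_time_eq hX hx hxs, hxs]

theorem exists_time_between_of_key_mem_uIcc (hX : Set.InjOn Prod.snd (X : Set Pt)) {r s : Pt}
    (hr : r ∈ X ∪ greedyG n X) (hs : s ∈ X ∪ greedyG n X) (htime : r.2 < s.2) (hne : r.1 ≠ s.1)
    (hkey : r.1 ∈ Set.uIcc (OP X s).1 s.1) :
    ∃ u ∈ X ∪ greedyG n X, u.1 = s.1 ∧ r.2 < u.2 ∧ u.2 < s.2 := by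
  rcases mem_union.1 hs with hsX | hsG
  · rw [OP_eq_of_time_eq hX hsX rfl, Set.uIcc_self] at hkey
    exact absurd hkey hne
  obtain ⟨-, x, hx, hxs, u, hu, hus, hut, -, hempty⟩ :=
    mem_greedyStep.1 (mem_greedyStep_of_mem_greedyG hsG)
  rw [OP_eq_of_time_eq hX hx hxs, ← hus] at hkey
  refine ⟨u, hu, hus, ?_, hut⟩
  by_contra! hur
  have hrect : inRect x u r :=
    inRect_iff_mem_uIcc.2 ⟨hkey, Set.mem_uIcc_of_ge hur (htime.le.trans_eq hxs.symm)⟩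
  have hru : r = u := hempty r hr htime hrect
  exact hne (hru ▸ hus)

theorem hidden_lemma_right_general (hX : Set.InjOn Prod.snd (X : Set Pt)) {r s : Pt}
    (hr : r ∈ X ∪ greedyG n X) (hs : s ∈ X ∪ greedyG n X) (hkey : r.1 < s.1) (htime : r.2 < s.2)
    (hfirst : ∀ u ∈ X ∪ greedyG n X, u.1 = s.1 → r.2 < u.2 → s.2 ≤ u.2) :
    r.1 < (OP X s).1 ∧ r.2 < (OP X s).2 := by
  refine ⟨?_, htime.trans_eq (time_OP_eq hX hs).symm⟩
  by_contra! hOP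
  obtain ⟨u, hu, hus, hru, hlt⟩ :=
    exists_time_between_of_key_mem_uIcc hX hr hs htime hkey.ne (Set.mem_uIcc_of_le hOP hkey.le)
  exact (hfirst u hu hus hru).not_gt hlt

end Greedy

/-- hiding lemma, north-east version. Let `p, q, r ∈ X ∪ G` with
`time(q) < time(p)` and `key(p) < key(q)`, and suppose `r` hides `q` from `p`. If `s` is the
point of `X ∪ G` of smallest time among those below `q` with time greater than `time(r)` and
key greater than `key(r)`, then `key(OP(s)) > key(r)` and `time(OP(s)) > time(r)`. -/
theorem hidden_lemma_right (n : ℕ) (X : Finset Pt) (hX : IsPermPointSet n X)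
    (p q r s : Pt)
    (hp : p ∈ X ∪ greedyG n X) (hq : q ∈ X ∪ greedyG n X) (hr : r ∈ X ∪ greedyG n X)
    (ht : q.2 < p.2) (hk : p.1 < q.1)
    (hhide : (r.2 = q.2 ∧ r.1 < q.1 ∧ inRect p q r) ∨ inOpenRect p q r)
    (hs : s ∈ X ∪ greedyG n X) (hs1 : s.1 = q.1) (hs2 : q.2 < s.2)
    (hs3 : r.2 < s.2) (hs4 : r.1 < s.1)
    (hmin : ∀ s' ∈ X ∪ greedyG n X,
      s'.1 = q.1 → q.2 < s'.2 → r.2 < s'.2 → r.1 < s'.1 → s.2 ≤ s'.2) :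
    r.1 < (OP X s).1 ∧ r.2 < (OP X s).2 := by
  have hqr : q.2 ≤ r.2 := by rcases hhide with ⟨h, -, -⟩ | ⟨-, -, h, -⟩ <;> omega
  exact hidden_lemma_right_general hX.injOn_snd hr hs hs4 hs3 fun u hu hus hru =>
    hmin u hu (hus.trans hs1) (hqr.trans_lt hru) hru (hs4.trans_eq hus.symm)
end

section
/- For every block B of X there is no point of X ∪ G in UPB(B); that is, no point s ∈ X ∪ G satisfies time(s) < time(Top(B)) and key(s) = key(p) for some p ∈ B. -/
open Finset

attribute [local instance] Classical.propDecidable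

/-!
GREEDY only repeats, at a later time, a key that is already present. Hence the earliest point of
`X ∪ G` with a given key belongs to `X`. As `X` has only one point at the key of a given `p ∈ B`, a
point of `X ∪ G` sharing that key is no earlier than `p`, let alone than `Top(B)`.
-/

lemma exists_mem_key_eq_time_lt_of_mem_greedyStep {X G : Finset Pt} {t : ℤ} {s : Pt}
    (hs : s ∈ greedyStep X G t) : ∃ q ∈ X ∪ G, q.1 = s.1 ∧ q.2 < s.2 := by
  simp only [greedyStep, mem_biUnion, mem_image, mem_filter] at hs
  obtain ⟨-, -, q, ⟨⟨hq, hqt⟩, -⟩, rfl⟩ := hs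
  exact ⟨q, hq, rfl, hqt⟩

lemma exists_mem_key_eq_time_lt_of_mem_greedyUpTo {X : Finset Pt} {t : ℕ} {s : Pt}
    (hs : s ∈ greedyUpTo X t) : ∃ x ∈ X, x.1 = s.1 ∧ x.2 < s.2 := by
  induction t generalizing s with
  | zero => exact absurd hs (notMem_empty s)
  | succ t ih =>
    rcases mem_union.mp hs with hs_old | hs_new
    · exact ih hs_old
    · obtain ⟨q, hq, hqs_key, hqs_time⟩ := exists_mem_key_eq_time_lt_of_mem_greedyStep hs_new
      rcases mem_union.mp hq with hqX | hqG
      · exact ⟨q, hqX, hqs_key, hqs_time⟩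
      · obtain ⟨x, hx, hxq_key, hxq_time⟩ := ih hqG
        exact ⟨x, hx, hxq_key.trans hqs_key, hxq_time.trans hqs_time⟩

lemma exists_mem_key_eq_time_le_of_mem_union_greedyG {n : ℕ} {X : Finset Pt} {s : Pt}
    (hs : s ∈ X ∪ greedyG n X) : ∃ x ∈ X, x.1 = s.1 ∧ x.2 ≤ s.2 := by
  rcases mem_union.mp hs with hsX | hsG
  · exact ⟨s, hsX, rfl, le_rfl⟩
  · obtain ⟨x, hx, hkey, htime⟩ := exists_mem_key_eq_time_lt_of_mem_greedyUpTo hsG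
    exact ⟨x, hx, hkey, htime.le⟩

lemma time_le_of_mem_union_greedyG {n : ℕ} {X : Finset Pt}
    (hX : Set.InjOn Prod.fst (X : Set Pt)) {p s : Pt} (hp : p ∈ X) (hs : s ∈ X ∪ greedyG n X)
    (hkey : s.1 = p.1) : p.2 ≤ s.2 := by
  obtain ⟨x, hx, hxs_key, hxs_time⟩ := exists_mem_key_eq_time_le_of_mem_union_greedyG hs
  obtain rfl : x = p := hX hx hp (hxs_key.trans hkey)
  exact hxs_time

lemma headI_toList_mem {α : Type*} [Inhabited α] {s : Finset α} (hs : s.Nonempty) :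
    s.toList.headI ∈ s := by
  obtain ⟨a, l, hal⟩ := List.exists_cons_of_ne_nil hs.toList_ne_nil
  rw [← mem_toList, hal]
  exact List.mem_cons_self

lemma time_TopPt_le {B : Finset Pt} {p : Pt} (hp : p ∈ B) : (TopPt B).2 ≤ p.2 := by
  obtain ⟨m, hm, hm_min⟩ := B.exists_min_image Prod.snd ⟨p, hp⟩
  have hTop : TopPt B ∈ B.filter (fun p => ∀ q ∈ B, p.2 ≤ q.2) :=
    headI_toList_mem ⟨m, mem_filter.mpr ⟨hm, hm_min⟩⟩
  exact (mem_filter.mp hTop).2 p hp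

lemma IsPermPointSet.injOn_fst {n : ℕ} {X : Finset Pt} (hX : IsPermPointSet n X) :
    Set.InjOn Prod.fst (X : Set Pt) := by
  obtain ⟨σ, rfl⟩ := hX
  intro x hx y hy hkey
  obtain ⟨a, -, rfl⟩ := mem_image.mp (mem_coe.mp hx)
  obtain ⟨b, -, rfl⟩ := mem_image.mp (mem_coe.mp hy)
  have hσ : σ a = σ b := Fin.ext (by simpa using hkey)
  rw [σ.injective hσ]

lemma IsBlock.subset {X B : Finset Pt} (hB : IsBlock X B) : B ⊆ X := by
  obtain ⟨-, ⟨i, j, rfl⟩, -⟩ := hB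
  exact filter_subset _ X

theorem no_point_in_upperbox_general (n : ℕ) {X : Finset Pt}
    (hX : Set.InjOn Prod.fst (X : Set Pt)) {B : Finset Pt} (hB : B ⊆ X) :
    ¬ ∃ s ∈ X ∪ greedyG n X, s.2 < (TopPt B).2 ∧ ∃ p ∈ B, s.1 = p.1 := by
  rintro ⟨s, hs, hs_above, p, hp, hkey⟩
  have hTop_le : (TopPt B).2 ≤ s.2 :=
    (time_TopPt_le hp).trans (time_le_of_mem_union_greedyG hX (hB hp) hs hkey)
  exact hTop_le.not_gt hs_above

/-- For every block `B` of `X`, there is no point of `X ∪ G` in `UPB(B)`: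
no point of `X ∪ G` has time smaller than `time(Top(B))` and the key of some point of `B`. -/
theorem no_point_in_upperbox (n : ℕ) (X : Finset Pt) (hX : IsPermPointSet n X)
    (B : Finset Pt) (hB : IsBlock X B) :
    ¬ ∃ s ∈ X ∪ greedyG n X, s.2 < (TopPt B).2 ∧ ∃ p ∈ B, s.1 = p.1 :=
  no_point_in_upperbox_general n hX.injOn_fst hB.subset
end
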